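/- There exists a constant C > 0 such that, uniformly for all real x, y with 2 ≤ y ≤ log x, one has f(x,y) ≤ Ψ(x,y) and f(x,y) ≥ (Ψ(x,y)/(1 + y/log x)) · (1 − C(log y/y + y/(log x · log y))). -/

import Mathlib

/-- `Pmax n` is the largest prime factor of `n`, with the convention `Pmax 1 = 1`. -/
def Pmax (n : ℕ) : ℕ := if n ≤ 1 then 1 else n.primeFactors.sup id

/-- The Schinzel–Szekeres function: if `n = p₁ p₂ ⋯ p_Ω` with `p₁ ≥ p₂ ≥ ⋯ ≥ p_Ω` prime,
`SS n = max_{1 ≤ k ≤ Ω} p₁ ⋯ p_{k-1} p_k²`, and `SS 1 = 1`.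
(`Nat.primeFactorsList n` is the *increasing* list of prime factors with multiplicity;
the value produced for the index `j` is the one for `k = Ω - j`.) -/
def SS (n : ℕ) : ℕ :=
  ((List.range n.primeFactorsList.length).map
    (fun j => (n.primeFactorsList.drop j).headI * (n.primeFactorsList.drop j).prod)).foldr max 1

/-- A chain in the divisor graph: a finite sequence of pairwise distinct positive
integers in which any two consecutive terms are adjacent in the divisor graph
(the smaller divides the larger). -/
def IsDivChain (l : List ℕ) : Prop :=
  l.Nodup ∧ (∀ n ∈ l, 0 < n) ∧ l.Chain' (fun a b => a ∣ b ∨ b ∣ a)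

/-- `fxy x y` is the maximum length of a chain all of whose terms `n`
satisfy `n ≤ x` and `P(n) ≤ y`. -/
noncomputable def fxy (x y : ℝ) : ℕ :=
  sSup {L : ℕ | ∃ l : List ℕ, IsDivChain l ∧
    (∀ n ∈ l, (n : ℝ) ≤ x ∧ (Pmax n : ℝ) ≤ y) ∧ l.length = L}

/-- `Psi x y = #{1 ≤ n ≤ x : P(n) ≤ y}`. -/
noncomputable def Psi (x y : ℝ) : ℕ :=
  {n : ℕ | 1 ≤ n ∧ (n : ℝ) ≤ x ∧ (Pmax n : ℝ) ≤ y}.ncard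

/-!
Add the primes one at a time. If the integers composed of the primes below `P` can be traversed
from `1` to the largest such prime `q`, then the integers `P ^ a * m` can be traversed one level
`a` after the other, since `P ^ a` is adjacent to `P ^ b` and `P ^ a * q` to `P ^ b * q`. A level
can be traversed only when `P ^ a * q ≤ x`, so the integers lost are those `n` whose part composed
of some first primes `p₀, …, pᵢ` is below `pᵢ pᵢ₊₁`. For a fixed `r`, each of these has either a
bounded part at `2`, or a part composed of the first `r` primes that is at most `y ^ 2`.

To count integers whose part composed of a set `Q` of primes is at most `Y`, bound the possible
parts by Rankin's trick, and compare the cofactors with all `y`-smooth numbers: omitting a prime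
`q` from the `π(y)` allowed ones divides the count by about `log x / (π(y) log q)`, because
replacing powers of the other primes by powers of `q` is injective. Since `π(y) ≪ y / log y`, the
exceptional sets have relative size `≪ y / (log x log y)` and `≤ (8 e u / r) ^ r`, where
`u = y / log x`; for large `r` the latter is at most `u / (1 + u)`, which leaves the factor
`1 / (1 + u)`.
-/

theorem pow_mul_dvd_or_dvd (P a b q : ℕ) : P ^ a * q ∣ P ^ b * q ∨ P ^ b * q ∣ P ^ a * q :=
  (le_total a b).imp (fun h ↦ Nat.mul_dvd_mul_right (pow_dvd_pow P h) q)
    fun h ↦ Nat.mul_dvd_mul_right (pow_dvd_pow P h) q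

/-- `HasDivPath S a b` means that the elements of `S` can be listed, each exactly once, as a chain
in the divisor graph that starts at `a` and ends at `b`. -/
def HasDivPath (S : Finset ℕ) (a b : ℕ) : Prop :=
  ∃ l, IsDivChain l ∧ l.head? = some a ∧ l.getLast? = some b ∧ l.toFinset = S

namespace HasDivPath

variable {S T : Finset ℕ} {a b c d : ℕ}

theorem singleton (ha : 0 < a) : HasDivPath {a} a a :=
  ⟨[a], ⟨List.nodup_singleton a, by simpa using ha, List.isChain_singleton a⟩, rfl, rfl, rfl⟩

theorem symm (h : HasDivPath S a b) : HasDivPath S b a := by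
  obtain ⟨l, ⟨hnodup, hpos, hchain⟩, hhead, hlast, rfl⟩ := h
  refine ⟨l.reverse, ⟨List.nodup_reverse.2 hnodup, fun n hn ↦ hpos n (List.mem_reverse.1 hn),
    List.isChain_reverse.2 (hchain.imp fun _ _ ↦ Or.symm)⟩, ?_, ?_, List.toFinset_reverse⟩
  · rw [List.head?_reverse, hlast]
  · rw [List.getLast?_reverse, hhead]

theorem union (h₁ : HasDivPath S a b) (h₂ : HasDivPath T c d) (hST : Disjoint S T)
    (hbc : b ∣ c ∨ c ∣ b) : HasDivPath (S ∪ T) a d := by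
  obtain ⟨l, ⟨hnodup, hpos, hchain⟩, hhead, hlast, rfl⟩ := h₁
  obtain ⟨l', ⟨hnodup', hpos', hchain'⟩, hhead', hlast', rfl⟩ := h₂
  refine ⟨l ++ l', ⟨?_, ?_, hchain.append hchain' ?_⟩, ?_, ?_, List.toFinset_append⟩
  · exact hnodup.append hnodup' (List.disjoint_toFinset_iff_disjoint.1 hST)
  · exact fun n hn ↦ (List.mem_append.1 hn).elim (hpos n) (hpos' n)
  · simpa [hlast, hhead'] using hbc
  · simp [List.head?_append, hhead]
  · simp [List.getLast?_append, hlast']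

theorem image_mul_left (h : HasDivPath S a b) (hc : 0 < c) :
    HasDivPath (S.image (c * ·)) (c * a) (c * b) := by
  obtain ⟨l, ⟨hnodup, hpos, hchain⟩, hhead, hlast, rfl⟩ := h
  refine ⟨l.map (c * ·), ⟨hnodup.map fun _ _ ↦ Nat.eq_of_mul_eq_mul_left hc, ?_, ?_⟩, ?_, ?_, ?_⟩
  · exact List.forall_mem_map.2 fun n hn ↦ Nat.mul_pos hc (hpos n hn)
  · exact (List.isChain_map _).2 (hchain.imp fun m n ↦
      Or.imp (Nat.mul_dvd_mul_left c) (Nat.mul_dvd_mul_left c))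
  · simp [hhead]
  · simp [hlast]
  · ext n; simp

theorem exists_image_pow_erase_one {P : ℕ} (hP : 1 < P) (h : ℕ) :
    ∃ c, HasDivPath (((Finset.range (h + 2)).erase 1).image (P ^ ·)) 1 (P ^ c) := by
  induction h with
  | zero => exact ⟨0, singleton one_pos⟩
  | succ h ih =>
    obtain ⟨c, hc⟩ := ih
    have hnew : (Finset.range (h + 3)).erase 1 =
        (Finset.range (h + 2)).erase 1 ∪ {h + 2} := by
      ext a; simp only [Finset.mem_erase, Finset.mem_range, Finset.mem_union,
        Finset.mem_singleton]; lia
    refine ⟨h + 2, ?_⟩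
    rw [hnew, Finset.image_union, Finset.image_singleton]
    refine hc.union (singleton (pow_pos (one_pos.trans hP) _)) ?_
      (by simpa using pow_mul_dvd_or_dvd P c (h + 2) 1)
    simp [(Nat.pow_right_injective hP).eq_iff]

-- The exponents are visited in the order `0, 2, 3, …, h + 1, 1`.
theorem image_pow {P : ℕ} (hP : 1 < P) (h : ℕ) :
    HasDivPath ((Finset.range (h + 2)).image (P ^ ·)) 1 P := by
  obtain ⟨c, hc⟩ := exists_image_pow_erase_one hP h
  rw [← Finset.insert_erase (show 1 ∈ Finset.range (h + 2) by simp), Finset.image_insert,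
    Finset.insert_eq, Finset.union_comm, pow_one]
  refine hc.union (singleton (one_pos.trans hP)) ?_
    (by simpa using pow_mul_dvd_or_dvd P c 1 1)
  rw [Finset.disjoint_singleton_right, Finset.mem_image]
  rintro ⟨a, ha, hPa⟩
  exact Finset.ne_of_mem_erase ha (Nat.pow_right_injective hP (hPa.trans (pow_one P).symm))

variable {P q s : ℕ} {T : ℕ → Finset ℕ}

theorem exists_biUnion_erase_one
    (hT : ∀ a ≤ 2 * s + 1, HasDivPath (T a) (P ^ a) (P ^ a * q))
    (hdisj : (Set.Iic (2 * s + 1)).PairwiseDisjoint T) :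
    ∃ c, HasDivPath (((Finset.range (2 * s + 2)).erase 1).biUnion T) 1 (P ^ c * q) := by
  induction s with
  | zero =>
    refine ⟨0, ?_⟩
    rw [show (Finset.range 2).erase 1 = {0} from rfl, Finset.singleton_biUnion]
    exact hT 0 (Nat.zero_le _)
  | succ s ih =>
    obtain ⟨c, hc⟩ := ih (fun a ha ↦ hT a (by lia)) (hdisj.subset (Set.Iic_subset_Iic.2 (by lia)))
    have hnew : (Finset.range (2 * (s + 1) + 2)).erase 1 =
        insert (2 * s + 3) (insert (2 * s + 2) ((Finset.range (2 * s + 2)).erase 1)) := by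
      ext a; simp only [Finset.mem_erase, Finset.mem_range, Finset.mem_insert]; lia
    have hup : HasDivPath (((Finset.range (2 * s + 2)).erase 1).biUnion T ∪ T (2 * s + 2)) 1
        (P ^ (2 * s + 2)) := by
      refine hc.union (hT _ (by lia)).symm ?_ (pow_mul_dvd_or_dvd _ _ _ _)
      refine (Finset.disjoint_biUnion_left _ _ _).2 fun a ha ↦ ?_
      have := Finset.mem_range.1 (Finset.mem_of_mem_erase ha)
      exact hdisj (Set.mem_Iic.2 (by lia)) (Set.mem_Iic.2 (by lia)) (by lia)
    refine ⟨2 * s + 3, ?_⟩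
    rw [hnew, Finset.biUnion_insert, Finset.biUnion_insert, Finset.union_comm,
      Finset.union_comm (T _)]
    refine hup.union (hT _ (by lia)) (Finset.disjoint_union_left.2 ⟨?_, ?_⟩)
      (.inl (pow_dvd_pow P (by lia)))
    · refine (Finset.disjoint_biUnion_left _ _ _).2 fun a ha ↦ ?_
      have := Finset.mem_range.1 (Finset.mem_of_mem_erase ha)
      exact hdisj (Set.mem_Iic.2 (by lia)) (Set.mem_Iic.2 (by lia)) (by lia)
    · exact hdisj (Set.mem_Iic.2 (by lia)) (Set.mem_Iic.2 (by lia)) (by lia)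

-- Level `0` is traversed upwards, then `2, 3, …, 2s + 1` alternately down and up, then `1`
-- downwards; an odd top level makes the directions fit.
theorem biUnion (hT : ∀ a ≤ 2 * s + 1, HasDivPath (T a) (P ^ a) (P ^ a * q))
    (hdisj : (Set.Iic (2 * s + 1)).PairwiseDisjoint T) :
    HasDivPath ((Finset.range (2 * s + 2)).biUnion T) 1 P := by
  obtain ⟨c, hc⟩ := exists_biUnion_erase_one hT hdisj
  rw [← Finset.insert_erase (show 1 ∈ Finset.range (2 * s + 2) by simp), Finset.biUnion_insert,
    Finset.union_comm]
  have hone : HasDivPath (T 1) (P ^ 1 * q) P := by simpa using (hT 1 (by lia)).symm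
  refine hc.union hone ((Finset.disjoint_biUnion_left _ _ _).2 fun a ha ↦ ?_)
    (pow_mul_dvd_or_dvd _ _ _ _)
  obtain ⟨hne, hlt⟩ := Finset.mem_erase.1 ha
  exact hdisj (Set.mem_Iic.2 (by have := Finset.mem_range.1 hlt; lia)) (Set.mem_Iic.2 (by lia)) hne

end HasDivPath

/-- The `S`-factored numbers (all prime factors in `S`) among `1, …, X`. -/
def factoredNumbersUpTo (S : Finset ℕ) (X : ℕ) : Finset ℕ :=
  {n ∈ Finset.range (X + 1) | n ∈ Nat.factoredNumbers S}

theorem mem_factoredNumbersUpTo {S : Finset ℕ} {X n : ℕ} :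
    n ∈ factoredNumbersUpTo S X ↔ n ≤ X ∧ n ∈ Nat.factoredNumbers S := by
  simp [factoredNumbersUpTo]

theorem one_mem_factoredNumbers (S : Finset ℕ) : 1 ∈ Nat.factoredNumbers S :=
  Nat.mem_factoredNumbers'.2 fun _ hp h ↦ absurd h hp.not_dvd_one

theorem pow_mul_inj_of_mem_factoredNumbers {S : Finset ℕ} {P a b m n : ℕ} (hP : P.Prime)
    (hPS : P ∉ S) (hm : m ∈ Nat.factoredNumbers S) (hn : n ∈ Nat.factoredNumbers S)
    (h : P ^ a * m = P ^ b * n) : a = b ∧ m = n := by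
  simpa using (Nat.equivProdNatFactoredNumbers hP hPS).injective
    (a₁ := (a, ⟨m, hm⟩)) (a₂ := (b, ⟨n, hn⟩)) (Subtype.ext h)

theorem mem_factoredNumbers_insert {S : Finset ℕ} {P n : ℕ} (hP : P.Prime) (hPS : P ∉ S) :
    n ∈ Nat.factoredNumbers (insert P S) ↔ ∃ a, ∃ m ∈ Nat.factoredNumbers S, P ^ a * m = n := by
  refine ⟨fun hn ↦ ?_, ?_⟩
  · obtain ⟨⟨a, m, hm⟩, h⟩ := (Nat.equivProdNatFactoredNumbers hP hPS).surjective ⟨n, hn⟩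
    exact ⟨a, m, hm, congrArg Subtype.val h⟩
  · rintro ⟨a, m, hm, rfl⟩
    exact Nat.pow_mul_mem_factoredNumbers hP a hm

theorem exists_odd_level {P q X : ℕ} (hP : 1 < P) (hq : 0 < q) (hX : P * q ≤ X) :
    ∃ s, P ^ (2 * s + 1) * q ≤ X ∧ ∀ a, P ^ (a + 1) * q ≤ X → a ≤ 2 * s + 1 := by
  have hPX : P ≤ X / q := (Nat.le_div_iff_mul_le hq).2 hX
  have hlog : 1 ≤ Nat.log P (X / q) := Nat.log_pos hP hPX
  refine ⟨(Nat.log P (X / q) - 1) / 2, ?_, fun a ha ↦ ?_⟩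
  · exact (Nat.le_div_iff_mul_le hq).1 (Nat.pow_le_of_le_log (by lia) (by lia))
  · have := Nat.le_log_of_pow_le hP ((Nat.le_div_iff_mul_le hq).2 ha)
    lia

section Levels

variable {S : Finset ℕ} {P q : ℕ}

theorem exists_hasDivPath_of_levels (hP : P.Prime) (hPS : P ∉ S) (hq : 0 < q) {G : ℕ → Prop}
    (ih : ∀ X, q ≤ X → ∃ T ⊆ factoredNumbersUpTo S X, HasDivPath T 1 q ∧
      ∀ m ∈ factoredNumbersUpTo S X, G m → m ∈ T) {X : ℕ} (hX : P * q ≤ X) :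
    ∃ T ⊆ factoredNumbersUpTo (insert P S) X, HasDivPath T 1 P ∧
      ∀ a, ∀ m ∈ Nat.factoredNumbers S, P ^ a * m ≤ X → G m → q * P ≤ m → P ^ a * m ∈ T := by
  obtain ⟨s, hs, hs_max⟩ := exists_odd_level hP.one_lt hq hX
  have hdiv {a m : ℕ} : m ≤ X / P ^ a ↔ P ^ a * m ≤ X := by
    rw [Nat.le_div_iff_mul_le (pow_pos hP.pos a), mul_comm]
  have hlevel : ∀ a ≤ 2 * s + 1, q ≤ X / P ^ a := fun a ha ↦
    hdiv.2 ((Nat.mul_le_mul_right q (Nat.pow_le_pow_right hP.pos ha)).trans hs)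
  choose! K hKsub hKpath hKmem using fun a (ha : a ≤ 2 * s + 1) ↦ ih _ (hlevel a ha)
  refine ⟨(Finset.range (2 * s + 2)).biUnion fun a ↦ (K a).image (P ^ a * ·), ?_,
    HasDivPath.biUnion (q := q) (fun a ha ↦ ?_) ?_, fun a m hm hmX hG hqm ↦ ?_⟩
  · refine Finset.biUnion_subset.2 fun a ha ↦ Finset.image_subset_iff.2 fun m hm ↦ ?_
    obtain ⟨hmX, hmS⟩ := mem_factoredNumbersUpTo.1 (hKsub a (Finset.mem_range_succ_iff.1 ha) hm)
    exact mem_factoredNumbersUpTo.2 ⟨hdiv.1 hmX, Nat.pow_mul_mem_factoredNumbers hP a hmS⟩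
  · simpa using (hKpath a ha).image_mul_left (pow_pos hP.pos a)
  · refine fun a ha b hb hab ↦ Finset.disjoint_left.2 fun n hna hnb ↦ hab ?_
    obtain ⟨m, hm, rfl⟩ := Finset.mem_image.1 hna
    obtain ⟨m', hm', h⟩ := Finset.mem_image.1 hnb
    exact (pow_mul_inj_of_mem_factoredNumbers hP hPS
      (mem_factoredNumbersUpTo.1 (hKsub b hb hm')).2
      (mem_factoredNumbersUpTo.1 (hKsub a ha hm)).2 h).1.symm
  · have ha : a ≤ 2 * s + 1 := hs_max a (by
      calc P ^ (a + 1) * q = P ^ a * (q * P) := by ring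
        _ ≤ P ^ a * m := Nat.mul_le_mul_left _ hqm
        _ ≤ X := hmX)
    exact Finset.mem_biUnion.2 ⟨a, Finset.mem_range.2 (by lia), Finset.mem_image_of_mem _
      (hKmem a ha m (mem_factoredNumbersUpTo.2 ⟨hdiv.2 hmX, hm⟩) hG)⟩

theorem exists_hasDivPath_insert (hP : P.Prime) (hPS : P ∉ S) (hq : 0 < q) {G : ℕ → Prop}
    (ih : ∀ X, q ≤ X → ∃ T ⊆ factoredNumbersUpTo S X, HasDivPath T 1 q ∧
      ∀ m ∈ factoredNumbersUpTo S X, G m → m ∈ T) {X : ℕ} (hX : P ≤ X) :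
    ∃ T ⊆ factoredNumbersUpTo (insert P S) X, HasDivPath T 1 P ∧
      ∀ a, ∀ m ∈ Nat.factoredNumbers S, P ^ a * m ≤ X → G m → q * P ≤ m → P ^ a * m ∈ T := by
  rcases le_or_gt (P * q) X with hPq | hPq
  · exact exists_hasDivPath_of_levels hP hPS hq ih hPq
  refine ⟨(Finset.range 2).image (P ^ ·), ?_, HasDivPath.image_pow hP.one_lt 0,
    fun a m _ hmX _ hqm ↦ ?_⟩
  · refine Finset.image_subset_iff.2 fun a ha ↦ mem_factoredNumbersUpTo.2 ⟨?_, ?_⟩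
    · have ha1 : a ≤ 1 := by simpa [Nat.lt_succ_iff] using ha
      exact (Nat.pow_le_pow_right hP.pos ha1).trans (by simpa using hX)
    · simpa using Nat.pow_mul_mem_factoredNumbers hP a (one_mem_factoredNumbers S)
  · have := Nat.le_mul_of_pos_left m (pow_pos hP.pos a)
    lia

end Levels

/-- The sufficient condition for `n` to be visited by the path built from the primes
`p 0, …, p j`: for each `i < j`, the part of `n` composed of `p 0, …, p i` is at least
`p i * p (i + 1)`. -/
def HasLargeParts (p : ℕ → ℕ) (j n : ℕ) : Prop :=
  ∀ i < j, ∃ d, d ∣ n ∧ d ∈ Nat.factoredNumbers ((Finset.range (i + 1)).image p) ∧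
    p i * p (i + 1) ≤ d

theorem HasLargeParts.of_pow_mul {p : ℕ → ℕ} {P : ℕ} (hP : P.Prime) {i j a m : ℕ}
    (hij : i < j) (hPi : ∀ k ≤ i, p k ≠ P) (h : HasLargeParts p j (P ^ a * m)) :
    ∃ d, d ∣ m ∧ d ∈ Nat.factoredNumbers ((Finset.range (i + 1)).image p) ∧
      p i * p (i + 1) ≤ d := by
  obtain ⟨d, hdvd, hd, hle⟩ := h i hij
  have hPS : P ∉ (Finset.range (i + 1)).image p := by
    simpa [Nat.lt_succ_iff] using hPi
  have hcop : d.Coprime (P ^ a) := (hP.factoredNumbers_coprime hPS hd).symm.pow_right a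
  exact ⟨d, hcop.dvd_of_dvd_mul_left hdvd, hd, hle⟩

theorem exists_hasDivPath_hasLargeParts {p : ℕ → ℕ} (hp : ∀ i, (p i).Prime)
    (hinj : p.Injective) (j : ℕ) {X : ℕ} (hX : p j ≤ X) :
    ∃ T ⊆ factoredNumbersUpTo ((Finset.range (j + 1)).image p) X, HasDivPath T 1 (p j) ∧
      ∀ n ∈ factoredNumbersUpTo ((Finset.range (j + 1)).image p) X, HasLargeParts p j n →
        n ∈ T := by
  induction j generalizing X with
  | zero =>
    have hmem {n : ℕ} : n ∈ Nat.factoredNumbers {p 0} ↔ ∃ a, p 0 ^ a = n := by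
      simpa [Nat.factoredNumbers_empty] using
        mem_factoredNumbers_insert (n := n) (hp 0) (Finset.notMem_empty _)
    obtain ⟨h, hlog⟩ := Nat.exists_eq_succ_of_ne_zero (Nat.log_pos (hp 0).one_lt hX).ne'
    have hle {a : ℕ} : a ∈ Finset.range (h + 2) ↔ p 0 ^ a ≤ X := by
      rw [← Nat.le_log_iff_pow_le (hp 0).one_lt ((hp 0).pos.trans_le hX).ne', hlog,
        Finset.mem_range_succ_iff]
    simp only [zero_add, Finset.range_one, Finset.image_singleton]
    refine ⟨_, ?_, HasDivPath.image_pow (hp 0).one_lt h, fun n hn _ ↦ ?_⟩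
    · exact Finset.image_subset_iff.2 fun a ha ↦
        mem_factoredNumbersUpTo.2 ⟨hle.1 ha, hmem.2 ⟨a, rfl⟩⟩
    · obtain ⟨hnX, hn⟩ := mem_factoredNumbersUpTo.1 hn
      obtain ⟨a, rfl⟩ := hmem.1 hn
      exact Finset.mem_image_of_mem _ (hle.2 hnX)
  | succ j ih =>
    have hPS : p (j + 1) ∉ (Finset.range (j + 1)).image p := by
      simp [hinj.eq_iff]
    have hne : ∀ i ≤ j, p i ≠ p (j + 1) := fun i hi h ↦ by have := hinj h; lia
    rw [Finset.range_add_one, Finset.image_insert]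
    obtain ⟨T, hT, hpath, hmem⟩ := exists_hasDivPath_insert (hp (j + 1)) hPS (hp j).pos
      (fun X hX ↦ ih hX) hX
    refine ⟨T, hT, hpath, fun n hn hparts ↦ ?_⟩
    obtain ⟨hnX, hnS⟩ := mem_factoredNumbersUpTo.1 hn
    obtain ⟨a, m, hm, rfl⟩ := (mem_factoredNumbers_insert (hp (j + 1)) hPS).1 hnS
    obtain ⟨d, hdm, -, hd⟩ := hparts.of_pow_mul (hp (j + 1)) j.lt_succ_self hne
    refine hmem a m hm hnX (fun i hi ↦ ?_) (hd.trans (Nat.le_of_dvd (Nat.pos_of_ne_zero hm.1) hdm))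
    exact hparts.of_pow_mul (hp (j + 1)) (hi.trans j.lt_succ_self)
      fun k hk ↦ hne k (hk.trans hi.le)

section Counting

variable {S P Q : Finset ℕ} {q X : ℕ}

theorem sum_le_card_factoredNumbersUpTo_insert (hq : q.Prime) (hqS : q ∉ S) {L : ℕ → ℕ}
    {φ : ℕ → ℕ → ℕ} (hφ : ∀ n ∈ factoredNumbersUpTo S X, ∀ i < L n,
      φ i n ∈ Nat.factoredNumbers S ∧ q ^ i * φ i n ≤ X)
    (hinj : ∀ i, {n | n ∈ factoredNumbersUpTo S X ∧ i < L n}.InjOn (φ i)) :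
    ∑ n ∈ factoredNumbersUpTo S X, L n ≤ (factoredNumbersUpTo (insert q S) X).card := by
  rw [← Finset.sum_congr rfl fun n _ ↦ Finset.card_range (L n), ← Finset.card_sigma]
  refine Finset.card_le_card_of_injOn (fun z ↦ q ^ z.2 * φ z.2 z.1) ?_ ?_
  · rintro ⟨n, i⟩ h
    obtain ⟨hn, hi⟩ := Finset.mem_sigma.1 h
    obtain ⟨hφS, hφX⟩ := hφ n hn i (Finset.mem_range.1 hi)
    exact mem_factoredNumbersUpTo.2 ⟨hφX, Nat.pow_mul_mem_factoredNumbers hq i hφS⟩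
  · rintro ⟨n, i⟩ h ⟨n', i'⟩ h' heq
    obtain ⟨hn, hi⟩ := Finset.mem_sigma.1 h
    obtain ⟨hn', hi'⟩ := Finset.mem_sigma.1 h'
    rw [Finset.mem_range] at hi hi'
    obtain ⟨rfl, hφeq⟩ := pow_mul_inj_of_mem_factoredNumbers hq hqS (hφ n hn i hi).1
      (hφ n' hn' i' hi').1 heq
    cases hinj i ⟨hn, hi⟩ ⟨hn', hi'⟩ hφeq
    rfl

theorem sum_log_div_le_card_factoredNumbersUpTo_insert (hq : q.Prime) (hqS : q ∉ S) :
    ∑ n ∈ factoredNumbersUpTo S X, (Nat.log q (X / n) + 1) ≤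
      (factoredNumbersUpTo (insert q S) X).card := by
  refine sum_le_card_factoredNumbersUpTo_insert (φ := fun _ n ↦ n) hq hqS (fun n hn i hi ↦ ?_)
    fun _ ↦ Set.injOn_id _
  obtain ⟨hnX, hnS⟩ := mem_factoredNumbersUpTo.1 hn
  have hpos : 0 < n := Nat.pos_of_ne_zero hnS.1
  refine ⟨hnS, (Nat.le_div_iff_mul_le hpos).1 (Nat.pow_le_of_le_log ?_ (Nat.lt_succ_iff.1 hi))⟩
  exact (Nat.div_pos hnX hpos).ne'

-- Trade the smallest sufficient power of `p` for `q ^ i`.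
theorem sum_log_ordProj_le_card_factoredNumbersUpTo_insert (hq : q.Prime) (hqS : q ∉ S) {p : ℕ}
    (hp : p.Prime) :
    ∑ n ∈ factoredNumbersUpTo S X, (Nat.log q (p ^ n.factorization p) + 1) ≤
      (factoredNumbersUpTo (insert q S) X).card := by
  have hdvd {n i : ℕ} (hi : i < Nat.log q (p ^ n.factorization p) + 1) :
      p ^ Nat.clog p (q ^ i) ∣ n :=
    (pow_dvd_pow p (Nat.clog_le_of_le_pow (Nat.pow_le_of_le_log (pow_pos hp.pos _).ne'
      (Nat.lt_succ_iff.1 hi)))).trans (Nat.ordProj_dvd n p)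
  refine sum_le_card_factoredNumbersUpTo_insert (φ := fun i n ↦ n / p ^ Nat.clog p (q ^ i)) hq hqS
    (fun n hn i hi ↦ ?_) fun i n hn n' hn' h ↦ ?_
  · obtain ⟨hnX, hnS⟩ := mem_factoredNumbersUpTo.1 hn
    refine ⟨Nat.mem_factoredNumbers_of_dvd hnS (Nat.div_dvd_of_dvd (hdvd hi)), ?_⟩
    calc q ^ i * (n / p ^ Nat.clog p (q ^ i))
        ≤ p ^ Nat.clog p (q ^ i) * (n / p ^ Nat.clog p (q ^ i)) :=
          Nat.mul_le_mul_right _ (Nat.le_pow_clog hp.one_lt _)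
      _ = n := Nat.mul_div_cancel' (hdvd hi)
      _ ≤ X := hnX
  · exact (Nat.div_left_inj (hdvd hn.2) (hdvd hn'.2)).1 h

theorem log_natCast_add_one_le (hq : 1 < q) (m : ℕ) :
    Real.log (m + 1) ≤ Real.log q * (Nat.log q m + 1) := by
  rw [mul_comm, ← Nat.cast_add_one, ← Nat.cast_add_one, ← Real.log_pow]
  exact Real.log_le_log (by positivity) (by exact_mod_cast Nat.lt_pow_succ_log_self hq m)

theorem log_eq_sum_log_ordProj {n : ℕ} (hn : n ∈ Nat.factoredNumbers S) :
    Real.log n = ∑ p ∈ S, Real.log (p ^ n.factorization p : ℕ) := by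
  rw [Real.log_nat_eq_sum_factorization, Finsupp.sum_of_support_subset (s := S)]
  · simp
  · exact Nat.primeFactors_subset_of_mem_factoredNumbers hn
  · simp

theorem log_add_one_le_of_mem_factoredNumbersUpTo (hq : 1 < q) {n : ℕ}
    (hn : n ∈ factoredNumbersUpTo S X) :
    Real.log (X + 1) ≤ Real.log q *
      (∑ p ∈ S, (Nat.log q (p ^ n.factorization p) + 1) + (Nat.log q (X / n) + 1) : ℕ) := by
  obtain ⟨-, hnS⟩ := mem_factoredNumbersUpTo.1 hn
  have hpos : (0 : ℝ) < n := by exact_mod_cast Nat.pos_of_ne_zero hnS.1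
  have hX : (X + 1 : ℝ) ≤ n * ((X / n : ℕ) + 1) := by
    exact_mod_cast Nat.lt_mul_div_succ X (Nat.pos_of_ne_zero hnS.1)
  have hlog (m : ℕ) : Real.log m ≤ Real.log q * (Nat.log q m + 1) := by
    refine le_trans ?_ (log_natCast_add_one_le hq m)
    rcases m.eq_zero_or_pos with rfl | hm
    · simp
    · exact Real.log_le_log (by exact_mod_cast hm) (by linarith)
  calc Real.log (X + 1) ≤ Real.log (n * ((X / n : ℕ) + 1)) := Real.log_le_log (by positivity) hX
    _ = ∑ p ∈ S, Real.log (p ^ n.factorization p : ℕ) + Real.log ((X / n : ℕ) + 1) := by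
      rw [Real.log_mul hpos.ne' (by positivity), log_eq_sum_log_ordProj hnS]
    _ ≤ ∑ p ∈ S, Real.log q * (Nat.log q (p ^ n.factorization p) + 1) +
          Real.log q * (Nat.log q (X / n) + 1) :=
      add_le_add (Finset.sum_le_sum fun p _ ↦ hlog _) (log_natCast_add_one_le hq _)
    _ = _ := by push_cast; rw [← Finset.mul_sum]; ring

theorem card_factoredNumbersUpTo_mul_log_le (hS : ∀ p ∈ S, p.Prime) (hq : q.Prime) (hqS : q ∉ S) :
    (factoredNumbersUpTo S X).card * Real.log (X + 1) ≤
      (S.card + 1) * Real.log q * (factoredNumbersUpTo (insert q S) X).card := by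
  have hcount : ∑ n ∈ factoredNumbersUpTo S X,
      (∑ p ∈ S, (Nat.log q (p ^ n.factorization p) + 1) + (Nat.log q (X / n) + 1)) ≤
        (S.card + 1) * (factoredNumbersUpTo (insert q S) X).card := by
    rw [Finset.sum_add_distrib, Finset.sum_comm, add_mul, one_mul]
    exact add_le_add (Finset.sum_le_card_nsmul _ _ _ fun p hp ↦
      sum_log_ordProj_le_card_factoredNumbersUpTo_insert hq hqS (hS p hp))
      (sum_log_div_le_card_factoredNumbersUpTo_insert hq hqS)
  calc (factoredNumbersUpTo S X).card * Real.log (X + 1)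
      ≤ ∑ n ∈ factoredNumbersUpTo S X, Real.log q *
          (∑ p ∈ S, (Nat.log q (p ^ n.factorization p) + 1) + (Nat.log q (X / n) + 1) : ℕ) := by
        rw [← nsmul_eq_mul]
        exact Finset.card_nsmul_le_sum _ _ _ fun n hn ↦
          log_add_one_le_of_mem_factoredNumbersUpTo hq.one_lt hn
    _ ≤ Real.log q * ((S.card + 1) * (factoredNumbersUpTo (insert q S) X).card : ℕ) := by
        rw [← Finset.mul_sum, ← Nat.cast_sum]
        gcongr
    _ = _ := by push_cast; ring

theorem card_factoredNumbersUpTo_sdiff_mul_pow_le (hP : ∀ p ∈ P, p.Prime) (hQP : Q ⊆ P) :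
    (factoredNumbersUpTo (P \ Q) X).card * Real.log (X + 1) ^ Q.card ≤
      (∏ q ∈ Q, P.card * Real.log q) * (factoredNumbersUpTo P X).card := by
  induction Q using Finset.induction_on with
  | empty => simp
  | insert q Q hqQ ih =>
    obtain ⟨hqP, hQP⟩ := Finset.insert_subset_iff.1 hQP
    have hlog : 0 ≤ Real.log (X + 1) := Real.log_nonneg (by simp)
    have hinsert : insert q (P \ insert q Q) = P \ Q := by
      rw [Finset.sdiff_insert, Finset.insert_erase (Finset.mem_sdiff.2 ⟨hqP, hqQ⟩)]
    have hcard : ((P \ insert q Q).card + 1 : ℝ) ≤ P.card := by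
      have hq : q ∉ P \ insert q Q := by simp
      rw [← Nat.cast_add_one, ← Finset.card_insert_of_notMem hq, hinsert]
      exact_mod_cast Finset.card_le_card Finset.sdiff_subset
    have hone := card_factoredNumbersUpTo_mul_log_le (X := X) (S := P \ insert q Q)
      (fun p hp ↦ hP p (Finset.mem_sdiff.1 hp).1) (hP q hqP) (by simp)
    rw [hinsert] at hone
    rw [Finset.prod_insert hqQ, Finset.card_insert_of_notMem hqQ, pow_succ']
    calc (factoredNumbersUpTo (P \ insert q Q) X).card *
          (Real.log (X + 1) * Real.log (X + 1) ^ Q.card)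
        = (factoredNumbersUpTo (P \ insert q Q) X).card * Real.log (X + 1) *
            Real.log (X + 1) ^ Q.card := (mul_assoc _ _ _).symm
      _ ≤ P.card * Real.log q * (factoredNumbersUpTo (P \ Q) X).card *
            Real.log (X + 1) ^ Q.card :=
          mul_le_mul_of_nonneg_right (hone.trans (by gcongr)) (pow_nonneg hlog _)
      _ = P.card * Real.log q *
            ((factoredNumbersUpTo (P \ Q) X).card * Real.log (X + 1) ^ Q.card) := mul_assoc _ _ _
      _ ≤ P.card * Real.log q *
            ((∏ q ∈ Q, P.card * Real.log q) * (factoredNumbersUpTo P X).card) :=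
          mul_le_mul_of_nonneg_left (ih hQP) (by positivity)
      _ = _ := (mul_assoc _ _ _).symm

end Counting

section SmallPart

variable {P Q : Finset ℕ} {X Y : ℕ}

/-- The `P`-factored numbers up to `X` all of whose `Q`-factored divisors are at most `Y`. For
`Q ⊆ P` these are the exceptional integers whose part composed of primes in `Q` is small. -/
def smallPartUpTo (P Q : Finset ℕ) (X Y : ℕ) : Finset ℕ :=
  {n ∈ factoredNumbersUpTo P X | ∀ d ∈ n.divisors, d ∈ Nat.factoredNumbers Q → d ≤ Y}

theorem exists_dvd_of_notMem_smallPartUpTo {n : ℕ} (hn : n ∈ factoredNumbersUpTo P X)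
    (h : n ∉ smallPartUpTo P Q X Y) : ∃ d, d ∣ n ∧ d ∈ Nat.factoredNumbers Q ∧ Y ≤ d := by
  simp only [smallPartUpTo, Finset.mem_filter, not_and, not_forall, not_le] at h
  obtain ⟨d, hd, hdQ, hYd⟩ := h hn
  exact ⟨d, Nat.dvd_of_mem_divisors hd, hdQ, hYd.le⟩

theorem exists_mul_eq_of_mem_factoredNumbers (Q : Finset ℕ) {n : ℕ}
    (hn : n ∈ Nat.factoredNumbers P) :
    ∃ d ∈ Nat.factoredNumbers Q, ∃ e ∈ Nat.factoredNumbers (P \ Q), d * e = n := by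
  refine ⟨_, Nat.prod_mem_factoredNumbers Q n,
    (n.primeFactorsList.filter (¬ · ∈ Q)).prod, ?_, ?_⟩
  · have hprime : ∀ p ∈ n.primeFactorsList.filter (¬ · ∈ Q), p.Prime := fun p hp ↦
      Nat.prime_of_mem_primeFactorsList (List.mem_of_mem_filter hp)
    refine Nat.mem_factoredNumbers'.2 fun p hp hdvd ↦ ?_
    have hmem := mem_list_primes_of_dvd_prod hp.prime (fun q hq ↦ (hprime q hq).prime) hdvd
    obtain ⟨hpn, hpQ⟩ := List.mem_filter.1 hmem
    exact Finset.mem_sdiff.2 ⟨hn.2 p hpn, by simpa using hpQ⟩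
  · simpa [Nat.prod_primeFactorsList hn.1] using
      List.prod_map_filter_mul_prod_map_filter_not (· ∈ Q) id n.primeFactorsList

theorem card_smallPartUpTo_le_mul (P Q : Finset ℕ) (X Y : ℕ) : (smallPartUpTo P Q X Y).card ≤
    (factoredNumbersUpTo Q Y).card * (factoredNumbersUpTo (P \ Q) X).card := by
  rw [← Finset.card_product]
  refine (Finset.card_le_card fun n hn ↦ ?_).trans
    (Finset.card_image_le (f := fun z : ℕ × ℕ ↦ z.1 * z.2))
  obtain ⟨hn, hsmall⟩ := Finset.mem_filter.1 hn
  obtain ⟨hnX, hnP⟩ := mem_factoredNumbersUpTo.1 hn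
  obtain ⟨d, hd, e, he, rfl⟩ := exists_mul_eq_of_mem_factoredNumbers Q hnP
  have hdY : d ≤ Y := hsmall d (Nat.mem_divisors.2 ⟨Nat.dvd_mul_right d e, hnP.1⟩) hd
  have heX : e ≤ X := (Nat.le_mul_of_pos_left e (Nat.pos_of_ne_zero hd.1)).trans hnX
  exact Finset.mem_image.2 ⟨(d, e), Finset.mem_product.2
    ⟨mem_factoredNumbersUpTo.2 ⟨hdY, hd⟩, mem_factoredNumbersUpTo.2 ⟨heX, he⟩⟩, rfl⟩

-- Rankin's trick: `1 ≤ (Y / n) ^ β` for `n ≤ Y`.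
theorem card_factoredNumbersUpTo_le_rpow_mul_prod (hQ : ∀ q ∈ Q, q.Prime) {β : ℝ} (hβ : 0 < β) :
    ((factoredNumbersUpTo Q Y).card : ℝ) ≤ (Y : ℝ) ^ β * ∏ q ∈ Q, (1 - (q : ℝ) ^ (-β))⁻¹ := by
  let f : ℕ →* ℝ :=
    { toFun n := (n : ℝ) ^ (-β)
      map_one' := by simp
      map_mul' a b := by rw [Nat.cast_mul, Real.mul_rpow a.cast_nonneg b.cast_nonneg] }
  have hf_nonneg (n : ℕ) : 0 ≤ f n := Real.rpow_nonneg n.cast_nonneg _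
  have hf_lt_one {p : ℕ} (hp : p.Prime) : ‖f p‖ < 1 := by
    rw [Real.norm_of_nonneg (hf_nonneg p)]
    exact Real.rpow_lt_one_of_one_lt_of_neg (by exact_mod_cast hp.one_lt) (neg_lt_zero.2 hβ)
  have hsum := (EulerProduct.summable_and_hasSum_factoredNumbers_prod_filter_prime_geometric
    hf_lt_one Q).2
  rw [Finset.filter_true_of_mem hQ] at hsum
  have hfinite : ∑ n ∈ factoredNumbersUpTo Q Y, f n ≤ ∏ q ∈ Q, (1 - f q)⁻¹ := by
    rw [← Finset.sum_subtype_of_mem f (p := (· ∈ Nat.factoredNumbers Q))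
      fun n hn ↦ (mem_factoredNumbersUpTo.1 hn).2]
    exact sum_le_hasSum _ (fun n _ ↦ hf_nonneg n) hsum
  calc ((factoredNumbersUpTo Q Y).card : ℝ)
      ≤ ∑ n ∈ factoredNumbersUpTo Q Y, (Y : ℝ) ^ β * f n := by
        rw [← nsmul_one]
        refine Finset.card_nsmul_le_sum _ _ _ fun n hn ↦ ?_
        obtain ⟨hnY, hnQ⟩ := mem_factoredNumbersUpTo.1 hn
        have hn0 : (0 : ℝ) < n := by exact_mod_cast Nat.pos_of_ne_zero hnQ.1
        calc (1 : ℝ) = (n : ℝ) ^ β * f n := by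
              simp [f, ← Real.rpow_add hn0]
          _ ≤ (Y : ℝ) ^ β * f n :=
              mul_le_mul_of_nonneg_right (by gcongr) (hf_nonneg n)
    _ ≤ _ := by
        rw [← Finset.mul_sum]
        exact mul_le_mul_of_nonneg_left hfinite (Real.rpow_nonneg Y.cast_nonneg _)

theorem inv_one_sub_exp_neg_le {v : ℝ} (hv : 0 < v) (hv1 : v ≤ 1) :
    (1 - Real.exp (-v))⁻¹ ≤ 2 / v := by
  have hexp : Real.exp (-v) ≤ (1 + v)⁻¹ := by
    rw [Real.exp_neg]
    exact inv_anti₀ (by positivity) (by linarith [Real.add_one_le_exp v])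
  have hinv : (1 + v)⁻¹ ≤ 1 - v / 2 := by
    rw [inv_le_iff_one_le_mul₀ (by positivity)]
    nlinarith
  rw [← inv_div]
  exact inv_anti₀ (by positivity) (by linarith)

theorem card_factoredNumbersUpTo_le_exp_mul_prod (hQ : ∀ q ∈ Q, q.Prime) {β : ℝ} (hβ : 0 < β)
    (hβQ : ∀ q ∈ Q, β * Real.log q ≤ 1) (hY : 0 < Y) :
    ((factoredNumbersUpTo Q Y).card : ℝ) ≤
      Real.exp (β * Real.log Y) * ∏ q ∈ Q, 2 / (β * Real.log q) := by
  refine (card_factoredNumbersUpTo_le_rpow_mul_prod hQ hβ).trans ?_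
  rw [Real.rpow_def_of_pos (by exact_mod_cast hY), mul_comm (Real.log Y)]
  refine mul_le_mul_of_nonneg_left (Finset.prod_le_prod (fun q hq ↦ ?_) fun q hq ↦ ?_)
    (Real.exp_pos _).le
  · rw [inv_nonneg, sub_nonneg]
    exact Real.rpow_le_one_of_one_le_of_nonpos (by exact_mod_cast (hQ q hq).one_lt.le)
      (neg_nonpos.2 hβ.le)
  · have hq1 : (1 : ℝ) < q := by exact_mod_cast (hQ q hq).one_lt
    rw [Real.rpow_def_of_pos (by positivity), show Real.log q * -β = -(β * Real.log q) by ring]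
    exact inv_one_sub_exp_neg_le (mul_pos hβ (Real.log_pos hq1)) (hβQ q hq)

theorem card_factoredNumbersUpTo_le_pow_mul_prod (hQ : ∀ q ∈ Q, q.Prime) (hne : Q.Nonempty)
    (hQY : ∀ q ∈ Q, Q.card * Real.log q ≤ Real.log Y) :
    ((factoredNumbersUpTo Q Y).card : ℝ) ≤
      Real.exp 1 ^ Q.card * ∏ q ∈ Q, 2 * Real.log Y / (Q.card * Real.log q) := by
  have hr : (0 : ℝ) < Q.card := by exact_mod_cast hne.card_pos
  have hlogY : 0 < Real.log Y := by
    obtain ⟨q, hq⟩ := hne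
    have hq1 : (1 : ℝ) < q := by exact_mod_cast (hQ q hq).one_lt
    exact (mul_pos hr (Real.log_pos hq1)).trans_le (hQY q hq)
  have hY : 0 < Y := Nat.pos_of_ne_zero fun h ↦ by simp [h] at hlogY
  have hβQ : ∀ q ∈ Q, Q.card / Real.log Y * Real.log q ≤ 1 := fun q hq ↦ by
    rw [div_mul_eq_mul_div]
    exact (div_le_one hlogY).2 (hQY q hq)
  convert card_factoredNumbersUpTo_le_exp_mul_prod hQ (div_pos hr hlogY) hβQ hY using 2
  · rw [div_mul_cancel₀ _ hlogY.ne', ← Real.exp_nat_mul, mul_one]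
  · refine Finset.prod_congr rfl fun q _ ↦ ?_
    field_simp

theorem card_smallPartUpTo_le (hP : ∀ p ∈ P, p.Prime) (hQP : Q ⊆ P) (hQ : Q.Nonempty) (hX : 0 < X)
    (hQY : ∀ q ∈ Q, Q.card * Real.log q ≤ Real.log Y) :
    ((smallPartUpTo P Q X Y).card : ℝ) ≤
      (2 * Real.exp 1 * P.card * Real.log Y / (Q.card * Real.log (X + 1))) ^ Q.card *
        (factoredNumbersUpTo P X).card := by
  have hQprime : ∀ q ∈ Q, q.Prime := fun q hq ↦ hP q (hQP hq)
  have hlogX : 0 < Real.log (X + 1) := Real.log_pos (by simpa using hX)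
  have hsmooth := card_factoredNumbersUpTo_le_pow_mul_prod hQprime hQ hQY
  have hrough := card_factoredNumbersUpTo_sdiff_mul_pow_le (X := X) hP hQP
  rw [← le_div_iff₀ (pow_pos hlogX _)] at hrough
  have hprod : (∏ q ∈ Q, 2 * Real.log Y / (Q.card * Real.log q)) * ∏ q ∈ Q, P.card * Real.log q =
      (2 * P.card * Real.log Y / Q.card) ^ Q.card := by
    rw [← Finset.prod_mul_distrib]
    refine Finset.prod_eq_pow_card fun q hq ↦ ?_
    have : 0 < Real.log q := Real.log_pos (by exact_mod_cast (hQprime q hq).one_lt)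
    field_simp
  calc ((smallPartUpTo P Q X Y).card : ℝ)
      ≤ (factoredNumbersUpTo Q Y).card * (factoredNumbersUpTo (P \ Q) X).card := by
        exact_mod_cast card_smallPartUpTo_le_mul P Q X Y
    _ ≤ (Real.exp 1 ^ Q.card * ∏ q ∈ Q, 2 * Real.log Y / (Q.card * Real.log q)) *
          ((∏ q ∈ Q, P.card * Real.log q) * (factoredNumbersUpTo P X).card /
            Real.log (X + 1) ^ Q.card) :=
        mul_le_mul hsmooth hrough (Nat.cast_nonneg _) ((Nat.cast_nonneg _).trans hsmooth)
    _ = Real.exp 1 ^ Q.card * ((∏ q ∈ Q, 2 * Real.log Y / (Q.card * Real.log q)) *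
          ∏ q ∈ Q, P.card * Real.log q) / Real.log (X + 1) ^ Q.card *
            (factoredNumbersUpTo P X).card := by ring
    _ = _ := by
        rw [hprod, ← mul_pow, ← div_pow]
        congr 2
        field_simp

end SmallPart

section Psi

variable {x y : ℝ}

theorem finite_setOf_le_and_Pmax_le (x y : ℝ) :
    {n : ℕ | 1 ≤ n ∧ (n : ℝ) ≤ x ∧ (Pmax n : ℝ) ≤ y}.Finite :=
  (Set.finite_Iic ⌊x⌋₊).subset fun _ hn ↦ Nat.le_floor hn.2.1

theorem IsDivChain.length_le_Psi {l : List ℕ} (hl : IsDivChain l)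
    (h : ∀ n ∈ l, (n : ℝ) ≤ x ∧ (Pmax n : ℝ) ≤ y) : l.length ≤ Psi x y := by
  rw [← List.toFinset_card_of_nodup hl.1, ← Set.ncard_coe_finset]
  refine Set.ncard_le_ncard (fun n hn ↦ ?_) (finite_setOf_le_and_Pmax_le x y)
  have hnl : n ∈ l := List.mem_toFinset.1 hn
  exact ⟨hl.2.1 n hnl, h n hnl⟩

theorem fxy_le_Psi (x y : ℝ) : fxy x y ≤ Psi x y :=
  csSup_le' fun _ ⟨_, hl, h, hL⟩ ↦ hL ▸ hl.length_le_Psi h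

theorem HasDivPath.card_le_fxy {T : Finset ℕ} {a b : ℕ} (hT : HasDivPath T a b)
    (h : ∀ n ∈ T, (n : ℝ) ≤ x ∧ (Pmax n : ℝ) ≤ y) : T.card ≤ fxy x y := by
  obtain ⟨l, hl, -, -, rfl⟩ := hT
  simp only [List.mem_toFinset] at h
  refine le_csSup ⟨Psi x y, ?_⟩ ⟨l, hl, h, (List.toFinset_card_of_nodup hl.1).symm⟩
  rintro _ ⟨l', hl', h', rfl⟩
  exact hl'.length_le_Psi h'

theorem Psi_of_neg (hx : x < 0) (y : ℝ) : Psi x y = 0 := by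
  rw [Psi, Set.ncard_eq_zero (finite_setOf_le_and_Pmax_le x y), Set.eq_empty_iff_forall_notMem]
  exact fun n hn ↦ (hn.2.1.trans_lt hx).not_ge n.cast_nonneg

theorem mem_factoredNumbers_primesLE_floor (hy : 1 ≤ y) {n : ℕ} :
    n ∈ Nat.factoredNumbers (Nat.primesLE ⌊y⌋₊) ↔ 1 ≤ n ∧ (Pmax n : ℝ) ≤ y := by
  rw [Nat.mem_factoredNumbers_iff_primeFactors_subset, Nat.one_le_iff_ne_zero]
  refine and_congr_right fun hn ↦ ?_
  rw [← Nat.le_floor_iff (by positivity)]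
  by_cases hn1 : n ≤ 1
  · have : n = 1 := by lia
    simpa [this, Pmax] using hy
  · simp only [Pmax, if_neg hn1, Finset.sup_le_iff, id, Finset.subset_iff, Nat.mem_primesLE]
    exact forall₂_congr fun p hp ↦ and_iff_left (Nat.prime_of_mem_primeFactors hp)

theorem mem_factoredNumbersUpTo_primesLE_floor (hx : 0 ≤ x) (hy : 1 ≤ y) {n : ℕ} :
    n ∈ factoredNumbersUpTo (Nat.primesLE ⌊y⌋₊) ⌊x⌋₊ ↔
      1 ≤ n ∧ (n : ℝ) ≤ x ∧ (Pmax n : ℝ) ≤ y := by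
  rw [mem_factoredNumbersUpTo, mem_factoredNumbers_primesLE_floor hy, Nat.le_floor_iff hx]
  tauto

theorem Psi_eq_card_factoredNumbersUpTo (hx : 0 ≤ x) (hy : 1 ≤ y) :
    Psi x y = (factoredNumbersUpTo (Nat.primesLE ⌊y⌋₊) ⌊x⌋₊).card := by
  rw [Psi, ← Set.ncard_coe_finset]
  congr 1
  ext n
  exact (mem_factoredNumbersUpTo_primesLE_floor hx hy).symm

end Psi

theorem nth_prime_le_iff {i m : ℕ} : Nat.nth Nat.Prime i ≤ m ↔ i < Nat.primeCounting m := by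
  rw [← Nat.lt_succ_iff, Nat.primeCounting, Nat.primeCounting', ← not_le, ← not_le,
    Nat.count_le_iff_le_nth Nat.infinite_setOfPred_prime]

theorem image_nth_prime_range_primeCounting (m : ℕ) :
    (Finset.range (Nat.primeCounting m)).image (Nat.nth Nat.Prime) = Nat.primesLE m := by
  ext q
  simp only [Finset.mem_image, Finset.mem_range, ← nth_prime_le_iff, Nat.mem_primesLE]
  constructor
  · rintro ⟨i, hi, rfl⟩
    exact ⟨hi, Nat.prime_nth_prime i⟩
  · rintro ⟨hqm, hq⟩
    exact ⟨_, by rwa [Nat.nth_count hq], Nat.nth_count hq⟩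

theorem hasLargeParts_nth_prime {X m r n : ℕ} {P : Finset ℕ}
    (hn : n ∈ factoredNumbersUpTo P X)
    (h₂ : n ∉ smallPartUpTo P {2} X (Nat.nth Nat.Prime r ^ 2))
    (hr : n ∉ smallPartUpTo P ((Finset.range r).image (Nat.nth Nat.Prime)) X (m ^ 2)) :
    HasLargeParts (Nat.nth Nat.Prime) (Nat.primeCounting m - 1) n := by
  have hmono := Nat.nth_monotone Nat.infinite_setOfPred_prime
  intro i hi
  rcases lt_or_ge i r with hir | hri
  · obtain ⟨d, hdn, hd, hle⟩ := exists_dvd_of_notMem_smallPartUpTo hn h₂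
    refine ⟨d, hdn, Nat.factoredNumbers_mono ?_ hd, le_trans ?_ hle⟩
    · exact Finset.singleton_subset_iff.2
        (Finset.mem_image.2 ⟨0, by simp, Nat.nth_prime_zero_eq_two⟩)
    · rw [sq]
      exact Nat.mul_le_mul (hmono hir.le) (hmono hir)
  · obtain ⟨d, hdn, hd, hle⟩ := exists_dvd_of_notMem_smallPartUpTo hn hr
    refine ⟨d, hdn, Nat.factoredNumbers_mono ?_ hd, le_trans ?_ hle⟩
    · exact Finset.image_subset_image (Finset.range_mono (by lia))
    · rw [sq]
      exact Nat.mul_le_mul (nth_prime_le_iff.2 (by lia)) (nth_prime_le_iff.2 (by lia))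

section Assembly

variable {x y : ℝ} {r : ℕ}

theorem Psi_le_fxy_add_card_smallPartUpTo (hy : 2 ≤ y) (hyx : y ≤ x) (r : ℕ) :
    Psi x y ≤ fxy x y +
      ((smallPartUpTo (Nat.primesLE ⌊y⌋₊) {2} ⌊x⌋₊ (Nat.nth Nat.Prime r ^ 2)).card +
      (smallPartUpTo (Nat.primesLE ⌊y⌋₊) ((Finset.range r).image (Nat.nth Nat.Prime)) ⌊x⌋₊
        (⌊y⌋₊ ^ 2)).card) := by
  have hπ : 0 < Nat.primeCounting ⌊y⌋₊ :=
    nth_prime_le_iff.1 (Nat.nth_prime_zero_eq_two.trans_le (Nat.le_floor hy))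
  have hlast : Nat.nth Nat.Prime (Nat.primeCounting ⌊y⌋₊ - 1) ≤ ⌊x⌋₊ :=
    (nth_prime_le_iff.2 (by lia)).trans (Nat.floor_le_floor hyx)
  obtain ⟨T, hT, hpath, hmem⟩ := exists_hasDivPath_hasLargeParts Nat.prime_nth_prime
    (Nat.nth_injective Nat.infinite_setOfPred_prime) _ hlast
  rw [Nat.sub_add_cancel hπ, image_nth_prime_range_primeCounting] at hT hmem
  have hmem_iff {n : ℕ} := mem_factoredNumbersUpTo_primesLE_floor (n := n)
    (show 0 ≤ x by linarith) (show 1 ≤ y by linarith)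
  have hTcard : T.card ≤ fxy x y := hpath.card_le_fxy fun n hn ↦ (hmem_iff.1 (hT hn)).2
  rw [Psi_eq_card_factoredNumbersUpTo (by linarith) (by linarith)]
  refine (Finset.card_le_card fun n hn ↦ ?_).trans ((Finset.card_union_le T _).trans
    (add_le_add hTcard (Finset.card_union_le _ _)))
  simp only [Finset.mem_union]
  by_contra! h
  exact h.1 (hmem n hn (hasLargeParts_nth_prime hn h.2.1 h.2.2))

theorem card_smallPartUpTo_two_le (hx : 2 ≤ x) (hy : 2 ≤ y)
    (hπ : (Nat.primeCounting ⌊y⌋₊ : ℝ) ≤ 2 * y / Real.log y) (r : ℕ) :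
    ((smallPartUpTo (Nat.primesLE ⌊y⌋₊) {2} ⌊x⌋₊ (Nat.nth Nat.Prime r ^ 2)).card : ℝ) ≤
      8 * Real.exp 1 * Real.log (Nat.nth Nat.Prime r) * (y / (Real.log x * Real.log y)) *
        Psi x y := by
  have hlogx : 0 < Real.log x := Real.log_pos (by linarith)
  have hlogy : 0 < Real.log y := Real.log_pos (by linarith)
  have hlogX : Real.log x ≤ Real.log (⌊x⌋₊ + 1) :=
    Real.log_le_log (by linarith) (Nat.lt_floor_add_one x).le
  have h2r : 2 ≤ Nat.nth Nat.Prime r := (Nat.prime_nth_prime r).two_le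
  rw [Psi_eq_card_factoredNumbersUpTo (by linarith) (by linarith)]
  refine (card_smallPartUpTo_le (fun p ↦ Nat.prime_of_mem_primesLE)
    (Finset.singleton_subset_iff.2 (Nat.mem_primesLE.2 ⟨Nat.le_floor hy, Nat.prime_two⟩))
    (Finset.singleton_nonempty 2) (Nat.floor_pos.2 (by linarith)) fun q hq ↦ ?_).trans ?_
  · rw [Finset.mem_singleton.1 hq, Finset.card_singleton, Nat.cast_one, one_mul]
    refine Real.log_le_log (by norm_num) ?_
    exact_mod_cast h2r.trans (Nat.le_self_pow two_ne_zero _)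
  · rw [Finset.card_singleton, pow_one, Nat.primesLE_card_eq_primeCounting, Nat.cast_pow,
      Real.log_pow, Nat.cast_one, one_mul, Nat.cast_ofNat]
    refine mul_le_mul_of_nonneg_right ?_ (Nat.cast_nonneg _)
    calc 2 * Real.exp 1 * (Nat.primeCounting ⌊y⌋₊) * (2 * Real.log (Nat.nth Nat.Prime r)) /
          Real.log (⌊x⌋₊ + 1)
        ≤ 2 * Real.exp 1 * (2 * y / Real.log y) * (2 * Real.log (Nat.nth Nat.Prime r)) /
          Real.log x := by gcongr
      _ = _ := by ring

theorem card_smallPartUpTo_range_le (hx : 2 ≤ x) (hy : 2 ≤ y)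
    (hπ : (Nat.primeCounting ⌊y⌋₊ : ℝ) ≤ 2 * y / Real.log y) (hr : r ≠ 0)
    (hry : Nat.nth Nat.Prime r ^ r ≤ ⌊y⌋₊) :
    ((smallPartUpTo (Nat.primesLE ⌊y⌋₊) ((Finset.range r).image (Nat.nth Nat.Prime)) ⌊x⌋₊
      (⌊y⌋₊ ^ 2)).card : ℝ) ≤ (8 * Real.exp 1 * (y / Real.log x) / r) ^ r * Psi x y := by
  have hlogx : 0 < Real.log x := Real.log_pos (by linarith)
  have hlogy : 0 < Real.log y := Real.log_pos (by linarith)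
  have hlogX : Real.log x ≤ Real.log (⌊x⌋₊ + 1) :=
    Real.log_le_log (by linarith) (Nat.lt_floor_add_one x).le
  have hfloor : (0 : ℝ) < ⌊y⌋₊ := Nat.cast_pos.2 (Nat.floor_pos.2 (by linarith))
  have hlogY : Real.log ⌊y⌋₊ ≤ Real.log y :=
    Real.log_le_log hfloor (Nat.floor_le (by linarith))
  have hcard : ((Finset.range r).image (Nat.nth Nat.Prime)).card = r := by
    rw [Finset.card_image_of_injective _ (Nat.nth_injective Nat.infinite_setOfPred_prime),
      Finset.card_range]
  have hpow {q : ℕ} (hq : q ∈ (Finset.range r).image (Nat.nth Nat.Prime)) : q ^ r ≤ ⌊y⌋₊ := by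
    obtain ⟨i, hi, rfl⟩ := Finset.mem_image.1 hq
    exact (Nat.pow_le_pow_left (Nat.nth_monotone Nat.infinite_setOfPred_prime
      (Finset.mem_range.1 hi).le) r).trans hry
  have hprime {q : ℕ} (hq : q ∈ (Finset.range r).image (Nat.nth Nat.Prime)) : q.Prime := by
    obtain ⟨i, -, rfl⟩ := Finset.mem_image.1 hq
    exact Nat.prime_nth_prime i
  rw [Psi_eq_card_factoredNumbersUpTo (by linarith) (by linarith)]
  refine (card_smallPartUpTo_le (fun p ↦ Nat.prime_of_mem_primesLE) (fun q hq ↦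
    Nat.mem_primesLE.2 ⟨(Nat.le_self_pow hr q).trans (hpow hq), hprime hq⟩)
    (by simpa using hr) (Nat.floor_pos.2 (by linarith)) fun q hq ↦ ?_).trans ?_
  · rw [hcard, ← Real.log_pow]
    refine Real.log_le_log (pow_pos (by exact_mod_cast (hprime hq).pos) r) ?_
    exact_mod_cast (hpow hq).trans (Nat.le_self_pow two_ne_zero _)
  · rw [hcard, Nat.primesLE_card_eq_primeCounting, Nat.cast_pow, Real.log_pow, Nat.cast_ofNat]
    have hlogX_pos : 0 < Real.log (⌊x⌋₊ + 1) := hlogx.trans_le hlogX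
    refine mul_le_mul_of_nonneg_right (pow_le_pow_left₀ (by positivity) ?_ r) (Nat.cast_nonneg _)
    calc 2 * Real.exp 1 * (Nat.primeCounting ⌊y⌋₊) * (2 * Real.log ⌊y⌋₊) /
          (r * Real.log (⌊x⌋₊ + 1))
        ≤ 2 * Real.exp 1 * (2 * y / Real.log y) * (2 * Real.log y) / (r * Real.log x) := by
          gcongr
      _ = _ := by field_simp; ring

theorem eventually_Psi_mul_le_fxy (hr : r ≠ 0) : ∀ᶠ y in Filter.atTop, ∀ x, y ≤ x →
    Psi x y * (1 - (8 * Real.exp 1 * (y / Real.log x) / r) ^ r -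
      8 * Real.exp 1 * Real.log (Nat.nth Nat.Prime r) * (y / (Real.log x * Real.log y))) ≤
        fxy x y := by
  have hlog4 : Real.log 4 < 2 := by
    rw [show (4 : ℝ) = 2 ^ 2 by norm_num, Real.log_pow, Nat.cast_ofNat]
    linarith [Real.log_two_lt_d9]
  have hπ := Chebyshev.eventually_primeCounting_le (sub_pos.2 hlog4)
  filter_upwards [hπ, Filter.eventually_ge_atTop 2,
    tendsto_nat_floor_atTop.eventually_ge_atTop (Nat.nth Nat.Prime r ^ r)] with y hπ hy hry x hyx
  rw [add_sub_cancel] at hπ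
  have h := Psi_le_fxy_add_card_smallPartUpTo hy hyx r
  have h₂ := card_smallPartUpTo_two_le (hy.trans hyx) hy hπ r
  have hr := card_smallPartUpTo_range_le (hy.trans hyx) hy hπ hr hry
  rify at h
  linarith

end Assembly

theorem exists_pow_div_le_div_one_add {c a : ℝ} (hc : 0 < c) (ha : 0 ≤ a) :
    ∃ r : ℕ, r ≠ 0 ∧ ∀ u, 0 ≤ u → u ≤ c → (a * u / r) ^ r ≤ u / (1 + u) := by
  obtain ⟨r, hr⟩ := exists_nat_gt ((a + 1) * (1 + c))
  have hr0 : (0 : ℝ) < r := lt_trans (by positivity) hr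
  have hr0' : r ≠ 0 := by exact_mod_cast hr0.ne'
  refine ⟨r, hr0', fun u hu huc ↦ ?_⟩
  have hbase : a * u / r ≤ u / (1 + u) := by
    rw [div_le_div_iff₀ hr0 (by linarith)]
    nlinarith [mul_le_mul_of_nonneg_left huc (mul_nonneg ha hu), mul_nonneg ha hu]
  have hu1 : u / (1 + u) ≤ 1 := (div_le_one (by linarith)).2 (by linarith)
  exact (pow_le_of_le_one (by positivity) (hbase.trans hu1) hr0').trans hbase

theorem div_one_add_mul_le {N u v w t c C D : ℝ} (hN : 0 ≤ N) (hu : 0 ≤ u) (huc : u ≤ c)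
    (hv : 0 ≤ v) (hw : 0 ≤ w) (ht : t ≤ u / (1 + u)) (hC : 0 ≤ C) (hD : (1 + c) * D ≤ C) :
    N / (1 + u) * (1 - C * (v + w)) ≤ N * (1 - t - D * w) := by
  have hu1 : 0 < 1 + u := by linarith
  have hDu : D ≤ C / (1 + u) := by
    rcases le_or_gt D 0 with hD0 | hD0
    · exact hD0.trans (by positivity)
    · rw [le_div_iff₀ hu1]
      nlinarith
  have key : 1 / (1 + u) - C / (1 + u) * w ≤ 1 - t - D * w := by
    have : 1 / (1 + u) = 1 - u / (1 + u) := by field_simp; ring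
    nlinarith
  calc N / (1 + u) * (1 - C * (v + w))
      = N * (1 / (1 + u) - C / (1 + u) * w - C / (1 + u) * v) := by ring
    _ ≤ N * (1 / (1 + u) - C / (1 + u) * w) := by
        refine mul_le_mul_of_nonneg_left (sub_le_self _ (by positivity)) hN
    _ ≤ N * (1 - t - D * w) := mul_le_mul_of_nonneg_left key hN

theorem eventually_le_of_le_mul_log {c : ℝ} (hc : 0 < c) :
    ∀ᶠ y in Filter.atTop, ∀ x, 0 < x → y ≤ c * Real.log x → y ≤ x := by
  filter_upwards [(isLittleO_pow_exp_pos_mul_atTop 1 (inv_pos.2 hc)).bound one_pos] with y hy x hx h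
  calc y ≤ Real.exp (c⁻¹ * y) := by
        simpa using (le_abs_self (y ^ 1)).trans hy
    _ ≤ x := by
        rw [← Real.le_log_iff_exp_le hx, inv_mul_le_iff₀ hc]
        exact h

theorem one_le_mul_log_div_add {y y₀ C w : ℝ} (hy : 2 ≤ y) (hyy₀ : y ≤ y₀)
    (hC : y₀ / Real.log 2 ≤ C) (hw : 0 ≤ w) : 1 ≤ C * (Real.log y / y + w) := by
  have hlog2 : 0 < Real.log 2 := Real.log_pos one_lt_two
  have hlog : Real.log 2 ≤ Real.log y := Real.log_le_log two_pos hy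
  have hC0 : 0 ≤ C := (div_nonneg (by linarith) hlog2.le).trans hC
  calc 1 = y / Real.log 2 * (Real.log 2 / y) := by
        field_simp
    _ ≤ y₀ / Real.log 2 * (Real.log y / y) :=
        mul_le_mul (by gcongr) (by gcongr) (by positivity) (div_nonneg (by linarith) hlog2.le)
    _ ≤ C * (Real.log y / y + w) := by
        exact mul_le_mul hC (le_add_of_nonneg_right hw)
          (div_nonneg (hlog2.le.trans hlog) (by linarith)) hC0

theorem stmt_1_general {c : ℝ} (hc : 0 < c) : ∃ C : ℝ, 0 < C ∧
    ∀ x y : ℝ, 2 ≤ y → y ≤ c * Real.log x →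
      (fxy x y : ℝ) ≤ (Psi x y : ℝ) ∧
      ((Psi x y : ℝ) / (1 + y / Real.log x)) *
          (1 - C * (Real.log y / y + y / (Real.log x * Real.log y))) ≤ (fxy x y : ℝ) := by
  obtain ⟨r, hr, hpow⟩ := exists_pow_div_le_div_one_add hc (a := 8 * Real.exp 1) (by positivity)
  obtain ⟨y₀, hy₀⟩ := Filter.eventually_atTop.1
    ((eventually_Psi_mul_le_fxy hr).and (eventually_le_of_le_mul_log hc))
  set D : ℝ := 8 * Real.exp 1 * Real.log (Nat.nth Nat.Prime r)
  have hD : 0 < (1 + c) * D := by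
    have : 0 < Real.log (Nat.nth Nat.Prime r) :=
      Real.log_pos (by exact_mod_cast (Nat.prime_nth_prime r).one_lt)
    positivity
  refine ⟨max ((1 + c) * D) (y₀ / Real.log 2), lt_max_of_lt_left hD, fun x y hy hyx ↦
    ⟨by exact_mod_cast fxy_le_Psi x y, ?_⟩⟩
  have hlogx : 0 < Real.log x := pos_of_mul_pos_right (by linarith) hc.le
  have hlogy : 0 < Real.log y := Real.log_pos (by linarith)
  have hx0 : x ≠ 0 := fun h ↦ by simp [h] at hlogx
  have hw : 0 ≤ y / (Real.log x * Real.log y) := by positivity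
  rcases hx0.lt_or_gt with hx | hx
  · simp [Psi_of_neg hx]
  rcases le_total y y₀ with hyy₀ | hyy₀
  · have h := one_le_mul_log_div_add hy hyy₀ (le_max_right ((1 + c) * D) _) hw
    exact (mul_nonpos_of_nonneg_of_nonpos (by positivity) (sub_nonpos.2 h)).trans
      (Nat.cast_nonneg _)
  · obtain ⟨hlower, hyx'⟩ := hy₀ y hyy₀
    have hu : y / Real.log x ≤ c := (div_le_iff₀ hlogx).2 hyx
    exact (div_one_add_mul_le (Nat.cast_nonneg _) (by positivity) hu (by positivity) hw
      (hpow _ (by positivity) hu) (le_max_of_le_left hD.le) (le_max_left _ _)).trans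
      (hlower x (hyx' x hx hyx))

/-- There exists `C > 0` such that uniformly for `2 ≤ y ≤ log x` one has
`f(x,y) ≤ Ψ(x,y)` and
`f(x,y) ≥ (Ψ(x,y)/(1 + y/log x)) · (1 − C(log y/y + y/(log x · log y)))`. -/
theorem stmt_1 : ∃ C : ℝ, 0 < C ∧ ∀ x y : ℝ, 2 ≤ y → y ≤ Real.log x →
    (fxy x y : ℝ) ≤ (Psi x y : ℝ) ∧
    ((Psi x y : ℝ) / (1 + y / Real.log x)) *
        (1 - C * (Real.log y / y + y / (Real.log x * Real.log y))) ≤ (fxy x y : ℝ) := by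
  simpa using stmt_1_general one_pos
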